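/- arXiv:2503.06461 — 2 statements merged into one kernel-verified Lean document; each statement's English description precedes it below -/
import Mathlib

section
/- Let n ≥ 1 be a natural number and η, b ∈ ℝ and ε ≥ 0. Let μ₋ be the n-fold product on ℝ^n of the real Gaussian measure with mean −η and variance 1. Then μ₋({x ∈ ℝ^n : ∃ δ ∈ ℝ^n, (∀ k, |δ_k| ≤ ε) ∧ (1/√n)·∑_{k=1}^n (x_k + δ_k) + b > 0}) = Φ(−√n·(η−ε) + b). (Robust error on the tail class −1 of the uniform-weight linear classifier with arbitrary bias b under ℓ∞ perturbations of size ε, as computed in the proof of Theorem 1.) -/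
/-! For a fixed data point the strongest perturbation of a linear score with weights `w` moves each
coordinate by `ε k` in the direction of the sign of `w k`, which raises the score by exactly
`∑ k, |w k| * ε k`. The robust error is therefore an ordinary tail probability of the unperturbed
score, which is Gaussian because it is a linear combination of independent Gaussians. -/

open MeasureTheory ProbabilityTheory

/-- The standard normal CDF, as an `ℝ≥0∞`-valued measure of `Iic t`. -/
noncomputable def stdNormalCDF (t : ℝ) : ENNReal := gaussianReal 0 1 (Set.Iic t)

section Perturbation

variable {ι R : Type*} [Fintype ι] [Ring R] [LinearOrder R] [IsStrictOrderedRing R]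

lemma sum_mul_le_sum_abs_mul_of_abs_le (w : ι → R) {δ ε : ι → R} (hδ : ∀ k, |δ k| ≤ ε k) :
    ∑ k, w k * δ k ≤ ∑ k, |w k| * ε k := by
  refine Finset.sum_le_sum fun k _ => ?_
  calc w k * δ k ≤ |w k * δ k| := le_abs_self _
    _ = |w k| * |δ k| := abs_mul _ _
    _ ≤ |w k| * ε k := mul_le_mul_of_nonneg_left (hδ k) (abs_nonneg _)

lemma exists_abs_le_and_sum_mul_eq_sum_abs_mul (w : ι → R) {ε : ι → R} (hε : ∀ k, 0 ≤ ε k) :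
    ∃ δ : ι → R, (∀ k, |δ k| ≤ ε k) ∧ ∑ k, w k * δ k = ∑ k, |w k| * ε k := by
  refine ⟨fun k => SignType.sign (w k) * ε k, fun k => ?_, ?_⟩
  · rcases lt_trichotomy (w k) 0 with hw | hw | hw <;> simp [hw, hε k, abs_of_nonneg]
  · simp_rw [← mul_assoc, self_mul_sign]

lemma exists_abs_le_and_lt_sum_mul_add_iff (w x : ι → R) {ε : ι → R} (hε : ∀ k, 0 ≤ ε k) (t : R) :
    (∃ δ : ι → R, (∀ k, |δ k| ≤ ε k) ∧ t < ∑ k, w k * (x k + δ k)) ↔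
      t < ∑ k, w k * x k + ∑ k, |w k| * ε k := by
  simp only [mul_add, Finset.sum_add_distrib]
  constructor
  · rintro ⟨δ, hδ, hlt⟩
    exact hlt.trans_le (add_le_add_right (sum_mul_le_sum_abs_mul_of_abs_le w hδ) _)
  · intro hlt
    obtain ⟨δ, hδ, hsum⟩ := exists_abs_le_and_sum_mul_eq_sum_abs_mul w hε
    exact ⟨δ, hδ, hsum ▸ hlt⟩

end Perturbation

section Gaussian

variable {Ω ι : Type*} {mΩ : MeasurableSpace Ω} {P : Measure Ω}

lemma hasLaw_gaussianReal_sum_of_iIndepFun [Fintype ι] {X : ι → Ω → ℝ} {m : ι → ℝ} {v : ι → NNReal}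
    (hX : ∀ i, HasLaw (X i) (gaussianReal (m i) (v i)) P) (hindep : iIndepFun X P) :
    HasLaw (fun ω => ∑ i, X i ω) (gaussianReal (∑ i, m i) (∑ i, v i)) P where
  aemeasurable := Finset.aemeasurable_fun_sum _ fun i _ => (hX i).aemeasurable
  map_eq := by
    have := hindep.isProbabilityMeasure
    apply Measure.ext_of_charFun
    ext t
    rw [hindep.charFun_map_fun_sum_eq_prod fun i => (hX i).aemeasurable]
    simp only [Finset.prod_apply, (hX _).map_eq, charFun_gaussianReal, ← Complex.exp_sum]
    congr 1
    push_cast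
    simp only [Finset.sum_sub_distrib, Finset.mul_sum, Finset.sum_mul, Finset.sum_div]

lemma hasLaw_gaussianReal_sum_mul_pi [Fintype ι] (w m : ι → ℝ) (v : ι → NNReal) :
    HasLaw (fun x : ι → ℝ => ∑ i, w i * x i)
      (gaussianReal (∑ i, w i * m i) (∑ i, ‖w i‖₊ ^ 2 * v i))
      (Measure.pi fun i => gaussianReal (m i) (v i)) := by
  refine hasLaw_gaussianReal_sum_of_iIndepFun (fun i => ?_)
    (iIndepFun_pi (X := fun i y => w i * y) fun i => by fun_prop)
  have heval := (measurePreserving_eval (fun i => gaussianReal (m i) (v i)) i).hasLaw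
  convert! gaussianReal_const_mul heval (w i) using 3
  ext
  simp

lemma hasLaw_gaussianReal_zero_one_sub_div_sqrt {Y : Ω → ℝ} {m : ℝ} {v : NNReal}
    (hY : HasLaw Y (gaussianReal m v) P) (hv : v ≠ 0) :
    HasLaw (fun ω => (m - Y ω) / √v) (gaussianReal 0 1) P := by
  convert! gaussianReal_div_const (gaussianReal_const_sub hY m) √v using 2
  · simp
  · ext
    simp [hv]

lemma measure_lt_eq_stdNormalCDF_of_hasLaw {Y : Ω → ℝ} {m : ℝ} {v : NNReal}
    (hY : HasLaw Y (gaussianReal m v) P) (hv : v ≠ 0) (t : ℝ) :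
    P {ω | t < Y ω} = stdNormalCDF ((m - t) / √v) := by
  have hsqrt : 0 < √(v : ℝ) := Real.sqrt_pos.2 (by positivity)
  have : NullSingletonClass (gaussianReal 0 1) := nullSingletonClass_gaussianReal one_ne_zero
  calc P {ω | t < Y ω} = P {ω | (m - Y ω) / √v < (m - t) / √v} := by
        simp only [div_lt_div_iff_of_pos_right hsqrt, sub_lt_sub_iff_left]
    _ = gaussianReal 0 1 (Set.Iio ((m - t) / √v)) :=
        (hasLaw_gaussianReal_zero_one_sub_div_sqrt hY hv).measure_eq measurableSet_Iio
    _ = stdNormalCDF ((m - t) / √v) := measure_congr Iio_ae_eq_Iic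

end Gaussian

theorem tail_robust_error_general {ι : Type*} [Fintype ι] (w m : ι → ℝ) (v : ι → NNReal)
    (hwv : ∑ k, w k ^ 2 * v k ≠ 0) (b : ℝ) {ε : ι → ℝ} (hε : ∀ k, 0 ≤ ε k) :
    (Measure.pi fun k => gaussianReal (m k) (v k))
      {x : ι → ℝ | ∃ δ : ι → ℝ, (∀ k, |δ k| ≤ ε k) ∧ ∑ k, w k * (x k + δ k) + b > 0}
      = stdNormalCDF
          ((∑ k, w k * m k + ∑ k, |w k| * ε k + b) / √(∑ k, w k ^ 2 * v k)) := by
  have hevent : {x : ι → ℝ | ∃ δ : ι → ℝ, (∀ k, |δ k| ≤ ε k) ∧ ∑ k, w k * (x k + δ k) + b > 0}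
      = {x | -b - ∑ k, |w k| * ε k < ∑ k, w k * x k} := by
    simp only [gt_iff_lt, ← neg_lt_iff_pos_add, exists_abs_le_and_lt_sum_mul_add_iff w _ hε,
      sub_lt_iff_lt_add]
  have hvar : ((∑ k, ‖w k‖₊ ^ 2 * v k : NNReal) : ℝ) = ∑ k, w k ^ 2 * v k := by simp
  have hvar_ne_zero : ∑ k, ‖w k‖₊ ^ 2 * v k ≠ 0 := by rwa [← NNReal.coe_ne_zero, hvar]
  rw [hevent, measure_lt_eq_stdNormalCDF_of_hasLaw (hasLaw_gaussianReal_sum_mul_pi w m v)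
    hvar_ne_zero, hvar]
  congr 2
  ring

/-- Robust error on the tail class `−1` of the uniform-weight linear classifier with
arbitrary bias `b` under `ℓ∞` perturbations of size `ε`. -/
theorem tail_robust_error (n : ℕ) (hn : 1 ≤ n) (η b ε : ℝ) (hε : 0 ≤ ε) :
    (Measure.pi fun _ : Fin n => gaussianReal (-η) 1)
      {x : Fin n → ℝ | ∃ δ : Fin n → ℝ, (∀ k, |δ k| ≤ ε) ∧
        (1 / Real.sqrt n) * (∑ k, (x k + δ k)) + b > 0}
      = stdNormalCDF (-Real.sqrt n * (η - ε) + b) := by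
  have hn_ne : (n : ℝ) ≠ 0 := Nat.cast_ne_zero.2 (Nat.one_le_iff_ne_zero.1 hn)
  have hvar : ∑ _k : Fin n, (1 / √n) ^ 2 * ((1 : NNReal) : ℝ) = 1 := by simp [hn_ne]
  have hweight : n * (1 / √n) = √n := by rw [mul_one_div, Real.div_sqrt]
  simp_rw [Finset.mul_sum]
  rw [tail_robust_error_general (fun _ => 1 / √n) (fun _ => -η) (fun _ => 1)
    (by simp [hn_ne]) b fun _ => hε, hvar, Real.sqrt_one, div_one, abs_of_nonneg (by positivity)]
  simp only [Finset.sum_const, Finset.card_univ, Fintype.card_fin, nsmul_eq_mul, ← mul_assoc,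
    hweight]
  congr 1
  ring
end

section
/- Let n ≥ 1 be a natural number and η, b ∈ ℝ and ε ≥ 0. Let μ₊ be the n-fold product on ℝ^n of the real Gaussian measure with mean +η and variance 1. Then μ₊({x ∈ ℝ^n : ∃ δ ∈ ℝ^n, (∀ k, |δ_k| ≤ ε) ∧ (1/√n)·∑_{k=1}^n (x_k + δ_k) + b < 0}) = Φ(−√n·(η−ε) − b). (Robust error on the head class +1 of the uniform-weight linear classifier with arbitrary bias b under ℓ∞ perturbations of size ε, as computed in the proof of Theorem 1.) -/
open MeasureTheory ProbabilityTheory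

/-!
By `ℓ¹`–`ℓ∞` duality, an adversary of budget `ε` can lower a linear score `∑ i, w i * x i + b` by
at most `ε * ∑ i, |w i|`, attained at `δ = -ε • sign w`. The robust error event is therefore a
half-space in the direction `w`, and its probability is read off the Gaussian law of
`∑ i, w i * x i` after standardization.
-/

open scoped NNReal

section GaussianLaws

variable {ι Ω : Type*} [Fintype ι] {mΩ : MeasurableSpace Ω} {P : Measure Ω}

lemma hasLaw_sum_gaussianReal {X : ι → Ω → ℝ} {m : ι → ℝ} {v : ι → ℝ≥0}
    (hindep : iIndepFun X P) (hX : ∀ i, HasLaw (X i) (gaussianReal (m i) (v i)) P) :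
    HasLaw (fun ω => ∑ i, X i ω) (gaussianReal (∑ i, m i) (∑ i, v i)) P where
  aemeasurable := Finset.aemeasurable_fun_sum _ fun i _ => (hX i).aemeasurable
  map_eq := by
    have := hindep.isProbabilityMeasure
    refine Measure.ext_of_charFun (funext fun t => ?_)
    rw [hindep.charFun_map_fun_sum_eq_prod fun i => (hX i).aemeasurable]
    simp only [Finset.prod_apply, (hX _).map_eq, charFun_gaussianReal, ← Complex.exp_sum]
    push_cast
    simp only [Finset.sum_sub_distrib, Finset.mul_sum, Finset.sum_mul, Finset.sum_div]

lemma hasLaw_sum_mul_pi_gaussianReal (w m : ι → ℝ) (v : ι → ℝ≥0) :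
    HasLaw (fun x : ι → ℝ => ∑ i, w i * x i)
      (gaussianReal (∑ i, w i * m i) (∑ i, .mk (w i ^ 2) (sq_nonneg _) * v i))
      (Measure.pi fun i => gaussianReal (m i) (v i)) :=
  hasLaw_sum_gaussianReal
    (iIndepFun_pi (X := fun i y => w i * y) fun i => by fun_prop)
    fun i => gaussianReal_const_mul
      (measurePreserving_eval (fun i => gaussianReal (m i) (v i)) i).hasLaw (w i)

lemma hasLaw_standardize_gaussianReal (m : ℝ) {v : ℝ≥0} (hv : v ≠ 0) :
    HasLaw (fun x => (x - m) / √v) (gaussianReal 0 1) (gaussianReal m v) := by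
  have hvar : v / .mk (√(v : ℝ) ^ 2) (sq_nonneg _) = 1 := by
    ext
    simp [hv]
  have hlaw : HasLaw (fun x => (x - m) / √v) _ (gaussianReal m v) :=
    gaussianReal_div_const (gaussianReal_sub_const HasLaw.id m) √v
  rwa [hvar, sub_self, zero_div] at hlaw

lemma gaussianReal_Iio_eq_stdNormalCDF (m t : ℝ) {v : ℝ≥0} (hv : v ≠ 0) :
    gaussianReal m v (Set.Iio t) = stdNormalCDF ((t - m) / √v) := by
  have hsqrt : 0 < √(v : ℝ) := by positivity
  have : NullSingletonClass (gaussianReal 0 1) := nullSingletonClass_gaussianReal one_ne_zero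
  calc gaussianReal m v (Set.Iio t)
      = gaussianReal m v {x | (x - m) / √v < (t - m) / √v} := by
        simp only [div_lt_div_iff_of_pos_right hsqrt, sub_lt_sub_iff_right]; rfl
    _ = gaussianReal 0 1 (Set.Iio ((t - m) / √v)) :=
        (hasLaw_standardize_gaussianReal m hv).measure_eq measurableSet_Iio
    _ = stdNormalCDF ((t - m) / √v) := measure_congr Iio_ae_eq_Iic

end GaussianLaws

section Perturbations

variable {ι : Type*} [Fintype ι]

lemma isLeast_sum_mul_of_abs_le (w : ι → ℝ) {ε : ℝ} (hε : 0 ≤ ε) :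
    IsLeast ((fun δ : ι → ℝ => ∑ i, w i * δ i) '' {δ | ∀ i, |δ i| ≤ ε}) (-(ε * ∑ i, |w i|)) := by
  constructor
  · refine ⟨fun i => -(ε * SignType.sign (w i)), fun i => ?_, ?_⟩
    · rw [abs_neg, abs_mul, abs_of_nonneg hε]
      refine mul_le_of_le_one_right hε ?_
      cases SignType.sign (w i) <;> simp
    · simp only [mul_neg, Finset.sum_neg_distrib, Finset.mul_sum, mul_left_comm _ ε, self_mul_sign]
  · rintro _ ⟨δ, hδ, rfl⟩
    calc -(ε * ∑ i, |w i|) = ∑ i, -(|w i| * ε) := by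
          rw [Finset.sum_neg_distrib, ← Finset.sum_mul, mul_comm]
      _ ≤ ∑ i, -|w i * δ i| := by
          simp only [abs_mul]
          gcongr with i
          exact hδ i
      _ ≤ ∑ i, w i * δ i := Finset.sum_le_sum fun i _ => neg_abs_le _

lemma exists_sum_mul_add_neg_iff (w x : ι → ℝ) (b : ℝ) {ε : ℝ} (hε : 0 ≤ ε) :
    (∃ δ : ι → ℝ, (∀ i, |δ i| ≤ ε) ∧ ∑ i, w i * (x i + δ i) + b < 0) ↔
      ∑ i, w i * x i < ε * ∑ i, |w i| - b := by
  have hscore (δ : ι → ℝ) : ∑ i, w i * (x i + δ i) + b < 0 ↔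
      ∑ i, w i * δ i < -b - ∑ i, w i * x i := by
    simp only [mul_add, Finset.sum_add_distrib]
    constructor <;> intro _ <;> linarith
  calc (∃ δ : ι → ℝ, (∀ i, |δ i| ≤ ε) ∧ ∑ i, w i * (x i + δ i) + b < 0)
    _ ↔ ∃ δ : ι → ℝ, (∀ i, |δ i| ≤ ε) ∧ ∑ i, w i * δ i < -b - ∑ i, w i * x i :=
        exists_congr fun δ => and_congr_right fun _ => hscore δ
    _ ↔ -(ε * ∑ i, |w i|) < -b - ∑ i, w i * x i := by
        rw [isGLB_lt_iff (isLeast_sum_mul_of_abs_le w hε).isGLB, Set.exists_mem_image]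
        rfl
    _ ↔ ∑ i, w i * x i < ε * ∑ i, |w i| - b := by constructor <;> intro _ <;> linarith

theorem head_robust_error_general (w m : ι → ℝ) (v : ι → ℝ≥0)
    (hvar : ∑ i, w i ^ 2 * v i ≠ 0) (b : ℝ) {ε : ℝ} (hε : 0 ≤ ε) :
    (Measure.pi fun i => gaussianReal (m i) (v i))
      {x | ∃ δ : ι → ℝ, (∀ i, |δ i| ≤ ε) ∧ ∑ i, w i * (x i + δ i) + b < 0}
      = stdNormalCDF ((ε * ∑ i, |w i| - b - ∑ i, w i * m i) / √(∑ i, w i ^ 2 * v i)) := by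
  have hcoe : ((∑ i, .mk (w i ^ 2) (sq_nonneg _) * v i : ℝ≥0) : ℝ) = ∑ i, w i ^ 2 * v i := by
    push_cast
    rfl
  simp only [exists_sum_mul_add_neg_iff w _ b hε]
  rw [(hasLaw_sum_mul_pi_gaussianReal w m v).measure_eq measurableSet_Iio, ← hcoe]
  exact gaussianReal_Iio_eq_stdNormalCDF _ _ (NNReal.coe_ne_zero.1 (hcoe.trans_ne hvar))

end Perturbations

lemma sum_one_div_sqrt_mul (n : ℕ) (c : ℝ) : ∑ _ : Fin n, 1 / √(n : ℝ) * c = √n * c := by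
  rw [Fin.sum_const, nsmul_eq_mul, ← mul_assoc, mul_one_div, Real.div_sqrt]

lemma sum_abs_one_div_sqrt (n : ℕ) : ∑ _ : Fin n, |1 / √(n : ℝ)| = √n := by
  have habs : |1 / √(n : ℝ)| = 1 / √n := abs_of_nonneg (by positivity)
  simpa only [habs, mul_one] using sum_one_div_sqrt_mul n 1

lemma sum_one_div_sqrt_sq {n : ℕ} (hn : n ≠ 0) : ∑ _ : Fin n, (1 / √(n : ℝ)) ^ 2 = 1 := by
  simp [hn]

/-- Robust error on the head class `+1` of the uniform-weight linear classifier with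
arbitrary bias `b` under `ℓ∞` perturbations of size `ε`. -/
theorem head_robust_error (n : ℕ) (hn : 1 ≤ n) (η b ε : ℝ) (hε : 0 ≤ ε) :
    (Measure.pi fun _ : Fin n => gaussianReal η 1)
      {x : Fin n → ℝ | ∃ δ : Fin n → ℝ, (∀ k, |δ k| ≤ ε) ∧
        (1 / Real.sqrt n) * (∑ k, (x k + δ k)) + b < 0}
      = stdNormalCDF (-Real.sqrt n * (η - ε) - b) := by
  have hvar : ∑ _ : Fin n, (1 / √(n : ℝ)) ^ 2 * (1 : ℝ≥0) = 1 := by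
    simpa only [NNReal.coe_one, mul_one] using sum_one_div_sqrt_sq (Nat.one_le_iff_ne_zero.1 hn)
  convert head_robust_error_general (fun _ => 1 / √n) (fun _ => η) (fun _ => 1)
    (hvar.trans_ne one_ne_zero) b hε using 2
  · simp only [Finset.mul_sum]
  · rw [hvar, sum_abs_one_div_sqrt, sum_one_div_sqrt_mul, Real.sqrt_one, div_one]
    ring
end
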